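/- arXiv:2302.14099 — 6 statements merged into one kernel-verified Lean document; each statement's English description precedes it below -/
import Mathlib

section
/- Let μ_0, μ_1, …, μ_g be probability measures on a common measurable space, let ε ≥ 0 and δ ≥ 0, and suppose that for every 1 ≤ ℓ ≤ g we have μ_{ℓ-1} ≈_{(ε,δ)} μ_ℓ. Then μ_0 ≈_{(gε, g·e^{gε}·δ)} μ_g; that is, for every measurable set F, μ_0(F) ≤ e^{gε}·μ_g(F) + g·e^{gε}·δ and μ_g(F) ≤ e^{gε}·μ_0(F) + g·e^{gε}·δ. (This is the hybrid-argument core of the paper's group-privacy theorem for challenge differential privacy.) -/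
open MeasureTheory

/-- `μ ≈_{(ε,δ)} ν`: for every measurable set `F`,
`μ F ≤ e^ε · ν F + δ` and `ν F ≤ e^ε · μ F + δ`. -/
def ApproxIndist {Ω : Type*} [MeasurableSpace Ω] (ε δ : ℝ) (μ ν : Measure Ω) : Prop :=
  ∀ F : Set Ω, MeasurableSet F →
    μ F ≤ ENNReal.ofReal (Real.exp ε) * ν F + ENNReal.ofReal δ ∧
    ν F ≤ ENNReal.ofReal (Real.exp ε) * μ F + ENNReal.ofReal δ

/-- One-sided composition: chaining `x ≤ e^ε₁ y + δ₁` with `y ≤ e^ε₂ z + δ₂`. -/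
theorem le_exp_add_mul_add_of_le {x y z : ENNReal} {ε₁ ε₂ δ₁ δ₂ δ : ℝ}
    (hδ₁ : 0 ≤ δ₁) (hδ₂ : 0 ≤ δ₂) (hδ : Real.exp ε₁ * δ₂ + δ₁ ≤ δ)
    (hxy : x ≤ ENNReal.ofReal (Real.exp ε₁) * y + ENNReal.ofReal δ₁)
    (hyz : y ≤ ENNReal.ofReal (Real.exp ε₂) * z + ENNReal.ofReal δ₂) :
    x ≤ ENNReal.ofReal (Real.exp (ε₁ + ε₂)) * z + ENNReal.ofReal δ :=
  calc
    x ≤ ENNReal.ofReal (Real.exp ε₁) *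
          (ENNReal.ofReal (Real.exp ε₂) * z + ENNReal.ofReal δ₂) + ENNReal.ofReal δ₁ :=
        hxy.trans (by gcongr)
    _ = ENNReal.ofReal (Real.exp (ε₁ + ε₂)) * z + ENNReal.ofReal (Real.exp ε₁ * δ₂ + δ₁) := by
        rw [Real.exp_add, ENNReal.ofReal_mul (Real.exp_pos _).le,
          ENNReal.ofReal_add (by positivity) hδ₁, ENNReal.ofReal_mul (Real.exp_pos _).le]
        ring
    _ ≤ ENNReal.ofReal (Real.exp (ε₁ + ε₂)) * z + ENNReal.ofReal δ := by gcongr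

/-- Approximate indistinguishability composes along a common intermediate measure. -/
theorem ApproxIndist.trans {Ω : Type*} [MeasurableSpace Ω] {μ ν ρ : Measure Ω}
    {ε₁ ε₂ δ₁ δ₂ δ : ℝ} (hμν : ApproxIndist ε₁ δ₁ μ ν) (hνρ : ApproxIndist ε₂ δ₂ ν ρ)
    (hδ₁ : 0 ≤ δ₁) (hδ₂ : 0 ≤ δ₂)
    (hδ : Real.exp ε₁ * δ₂ + δ₁ ≤ δ) (hδ' : Real.exp ε₂ * δ₁ + δ₂ ≤ δ) :
    ApproxIndist (ε₁ + ε₂) δ μ ρ := fun F hF =>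
  ⟨le_exp_add_mul_add_of_le hδ₁ hδ₂ hδ (hμν F hF).1 (hνρ F hF).1,
    add_comm ε₂ ε₁ ▸ le_exp_add_mul_add_of_le hδ₂ hδ₁ hδ' (hνρ F hF).2 (hμν F hF).2⟩

/-- Hybrid-argument core of group privacy: chaining `g` many `(ε,δ)`-indistinguishable
steps gives `(gε, g·e^{gε}·δ)`-indistinguishability between the endpoints. -/
theorem group_privacy_chain {Ω : Type*} [MeasurableSpace Ω] (g : ℕ) (μ : ℕ → Measure Ω)
    (hprob : ∀ ℓ, ℓ ≤ g → IsProbabilityMeasure (μ ℓ))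
    (ε δ : ℝ) (hε : 0 ≤ ε) (hδ : 0 ≤ δ)
    (h : ∀ ℓ, 1 ≤ ℓ → ℓ ≤ g → ApproxIndist ε δ (μ (ℓ - 1)) (μ ℓ)) :
    ApproxIndist (g * ε) (g * Real.exp (g * ε) * δ) (μ 0) (μ g) := by
  clear hprob
  induction g with
  | zero => intro F _; simp
  | succ n ih =>
    have hprefix := ih fun ℓ h1 hn => h ℓ h1 (hn.trans n.le_succ)
    have hlast := h (n + 1) (Nat.le_add_left 1 n) le_rfl
    rw [Nat.add_sub_cancel] at hlast
    have hsplit : ((n + 1 : ℕ) : ℝ) * ε = n * ε + ε := by push_cast; ring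
    have hmono : Real.exp (n * ε) ≤ Real.exp (n * ε + ε) :=
      Real.exp_le_exp.2 (le_add_of_nonneg_right hε)
    have hone : 1 ≤ Real.exp (n * ε + ε) := Real.one_le_exp (by positivity)
    rw [hsplit]
    refine hprefix.trans hlast (by positivity) hδ ?_ ?_
    · calc
        Real.exp (n * ε) * δ + n * Real.exp (n * ε) * δ
            = (n + 1 : ℕ) * Real.exp (n * ε) * δ := by push_cast; ring
        _ ≤ (n + 1 : ℕ) * Real.exp (n * ε + ε) * δ := by gcongr
    · calc
        Real.exp ε * (n * Real.exp (n * ε) * δ) + δ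
            = n * Real.exp (n * ε + ε) * δ + 1 * δ := by rw [Real.exp_add]; ring
        _ ≤ n * Real.exp (n * ε + ε) * δ + Real.exp (n * ε + ε) * δ := by gcongr
        _ = (n + 1 : ℕ) * Real.exp (n * ε + ε) * δ := by push_cast; ring
end

section
/- Let μ and ν be probability measures on a measurable space Ω, let ε, δ ≥ 0 with μ ≈_{(ε,δ)} ν, and let κ be a Markov kernel from Ω to a measurable space Ω'. Then the post-processed measures satisfy μ.bind κ ≈_{(ε,δ)} ν.bind κ; that is, (ε,δ)-indistinguishability is closed under (possibly randomized) post-processing. -/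
open MeasureTheory ProbabilityTheory

open scoped ENNReal

/-- A domination `μ F ≤ ρ F + d` on measurable sets extends to integrals of measurable
functions with values in `[0, 1]`. -/
theorem lintegral_le_lintegral_add_of_forall_measure_le {Ω : Type*} [MeasurableSpace Ω]
    (μ ρ : Measure Ω) [IsFiniteMeasure μ] [IsFiniteMeasure ρ] {d : ℝ≥0∞}
    (h : ∀ F, MeasurableSet F → μ F ≤ ρ F + d)
    {f : Ω → ℝ≥0∞} (hf : Measurable f) (hf_le : ∀ x, f x ≤ 1) :
    ∫⁻ x, f x ∂μ ≤ ∫⁻ x, f x ∂ρ + d := by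
  obtain ⟨s, hs⟩ := exists_isHahnDecomposition μ ρ
  have add_one_sub (m : Measure Ω) :
      ∫⁻ x in sᶜ, f x ∂m + ∫⁻ x in sᶜ, (1 - f x) ∂m = m sᶜ := by
    rw [← lintegral_add_left hf]
    simp [add_tsub_cancel_of_le (hf_le _)]
  have h_on : ∫⁻ x in s, f x ∂μ ≤ ∫⁻ x in s, f x ∂ρ := lintegral_mono' hs.le_on le_rfl
  have h_compl : ∫⁻ x in sᶜ, f x ∂μ ≤ ∫⁻ x in sᶜ, f x ∂ρ + d := by
    have h_fin : ∫⁻ x in sᶜ, (1 - f x) ∂ρ ≠ ∞ :=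
      ((le_add_self.trans_eq (add_one_sub ρ)).trans_lt (measure_lt_top ρ _)).ne
    refine (ENNReal.add_le_add_iff_right h_fin).1 ?_
    calc ∫⁻ x in sᶜ, f x ∂μ + ∫⁻ x in sᶜ, (1 - f x) ∂ρ
        ≤ ∫⁻ x in sᶜ, f x ∂μ + ∫⁻ x in sᶜ, (1 - f x) ∂μ := by
          gcongr 1
          exact lintegral_mono' hs.ge_on_compl le_rfl
      _ = μ sᶜ := add_one_sub μ
      _ ≤ ρ sᶜ + d := h _ hs.measurableSet.compl
      _ = ∫⁻ x in sᶜ, f x ∂ρ + d + ∫⁻ x in sᶜ, (1 - f x) ∂ρ := by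
          rw [← add_one_sub ρ, add_right_comm]
  rw [← lintegral_add_compl f hs.measurableSet (μ := μ),
    ← lintegral_add_compl f hs.measurableSet (μ := ρ), add_assoc]
  exact add_le_add h_on h_compl

/-- Post-processing by a Markov kernel preserves a one-sided bound `μ F ≤ c * ν F + d`. -/
theorem bind_apply_le_mul_add {Ω Ω' : Type*} [MeasurableSpace Ω] [MeasurableSpace Ω']
    (μ ν : Measure Ω) [IsFiniteMeasure μ] [IsFiniteMeasure ν] {c d : ℝ≥0∞} (hc : c ≠ ∞)
    (h : ∀ F, MeasurableSet F → μ F ≤ c * ν F + d)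
    (κ : Kernel Ω Ω') [IsMarkovKernel κ] {G : Set Ω'} (hG : MeasurableSet G) :
    μ.bind κ G ≤ c * ν.bind κ G + d := by
  have : IsFiniteMeasure (c • ν) := ν.smul_finite hc
  rw [Measure.bind_apply hG κ.aemeasurable, Measure.bind_apply hG κ.aemeasurable,
    ← smul_eq_mul, ← lintegral_smul_measure]
  exact lintegral_le_lintegral_add_of_forall_measure_le μ (c • ν) h
    (κ.measurable_coe hG) fun _ => prob_le_one

/-- `(ε,δ)`-indistinguishability is closed under (possibly randomized) post-processing
by a Markov kernel. -/
theorem approxIndist_postprocess {Ω Ω' : Type*} [MeasurableSpace Ω] [MeasurableSpace Ω']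
    (μ ν : Measure Ω) [IsProbabilityMeasure μ] [IsProbabilityMeasure ν]
    (ε δ : ℝ) (hε : 0 ≤ ε) (hδ : 0 ≤ δ)
    (h : ApproxIndist ε δ μ ν)
    (κ : Kernel Ω Ω') [IsMarkovKernel κ] :
    ApproxIndist ε δ (μ.bind κ) (ν.bind κ) := fun _ hG =>
  ⟨bind_apply_le_mul_add μ ν ENNReal.ofReal_ne_top (fun F hF => (h F hF).1) κ hG,
    bind_apply_le_mul_add ν μ ENNReal.ofReal_ne_top (fun F hF => (h F hF).2) κ hG⟩
end

section
/- (The Laplace mechanism is ε-differentially private.) Let X be a type, Δ > 0, and let f be a real-valued function on finite multisets over X with sensitivity Δ, i.e., |f(S ∪ {x}) − f(S)| ≤ Δ for every multiset S and every x ∈ X. Let ε > 0 and let L be a random variable with distribution Lap(Δ/ε). Then for every pair of neighboring multisets S, S' (one obtained from the other by adding one element) and every measurable set F ⊆ ℝ, Pr[f(S) + L ∈ F] ≤ e^ε · Pr[f(S') + L ∈ F]. Equivalently, the pushforward of Lap(Δ/ε) under translation by f(S) and the pushforward under translation by f(S') are (ε,0)-indistinguishable. -/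
open MeasureTheory

/-- The Laplace distribution `Lap(γ)` on `ℝ`, with density `x ↦ (1/(2γ))·exp(−|x|/γ)`
with respect to Lebesgue measure. -/
noncomputable def lap (γ : ℝ) : Measure ℝ :=
  volume.withDensity fun x => ENNReal.ofReal ((1 / (2 * γ)) * Real.exp (-|x| / γ))

/-- Two multisets are neighboring if one is obtained from the other by adding one element. -/
def Neighboring {X : Type*} (S S' : Multiset X) : Prop :=
  ∃ x : X, S' = x ::ₘ S ∨ S = x ::ₘ S'

/-- The `Lap(γ)`-probability that a translate by `a` lands in `F`, as an integral over `F` of the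
translated density. -/
lemma lap_translate_preimage (γ a : ℝ) {F : Set ℝ} (hF : MeasurableSet F) :
    lap γ {z : ℝ | a + z ∈ F} =
      ∫⁻ x in F, ENNReal.ofReal ((1 / (2 * γ)) * Real.exp (-|x - a| / γ)) := by
  have hpre : MeasurableSet {z : ℝ | a + z ∈ F} := measurable_const_add a hF
  rw [lap, withDensity_apply _ hpre,
    ← (measurePreserving_add_left volume a).setLIntegral_comp_preimage hF (by fun_prop)]
  simp only [add_sub_cancel_left]
  rfl

/-- Translating the Laplace density by at most `Δ` changes it by a factor of at most `e^(Δ/γ)`. -/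
lemma laplace_density_le {γ Δ a b : ℝ} (hγ : 0 < γ) (hab : |a - b| ≤ Δ) (x : ℝ) :
    (1 / (2 * γ)) * Real.exp (-|x - a| / γ) ≤
      Real.exp (Δ / γ) * ((1 / (2 * γ)) * Real.exp (-|x - b| / γ)) := by
  rw [mul_left_comm, ← Real.exp_add, ← add_div]
  gcongr
  linarith [abs_sub_le x a b]

lemma Neighboring.abs_sub_le {X : Type*} {Δ : ℝ} {f : Multiset X → ℝ}
    (hsens : ∀ (S : Multiset X) (x : X), |f (x ::ₘ S) - f S| ≤ Δ)
    {S S' : Multiset X} (h : Neighboring S S') : |f S - f S'| ≤ Δ := by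
  obtain ⟨x, rfl | rfl⟩ := h
  · rw [abs_sub_comm]
    exact hsens S x
  · exact hsens S' x

/-- The Laplace mechanism is `ε`-differentially private: if `f` has sensitivity `Δ` and
`L ∼ Lap(Δ/ε)`, then for neighboring multisets `S, S'` and every measurable `F ⊆ ℝ`,
`Pr[f(S) + L ∈ F] ≤ e^ε · Pr[f(S') + L ∈ F]`. -/
theorem laplace_mechanism_dp {X : Type*} (Δ ε : ℝ) (hΔ : 0 < Δ) (hε : 0 < ε)
    (f : Multiset X → ℝ)
    (hsens : ∀ (S : Multiset X) (x : X), |f (x ::ₘ S) - f S| ≤ Δ)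
    (S S' : Multiset X) (hneighbor : Neighboring S S')
    (F : Set ℝ) (hF : MeasurableSet F) :
    lap (Δ / ε) {z : ℝ | f S + z ∈ F} ≤
      ENNReal.ofReal (Real.exp ε) * lap (Δ / ε) {z : ℝ | f S' + z ∈ F} := by
  rw [lap_translate_preimage _ _ hF, lap_translate_preimage _ _ hF,
    ← lintegral_const_mul' _ _ ENNReal.ofReal_ne_top]
  refine lintegral_mono fun x => ?_
  rw [← ENNReal.ofReal_mul (Real.exp_nonneg ε)]
  refine ENNReal.ofReal_le_ofReal ?_
  have h := laplace_density_le (div_pos hΔ hε) (hneighbor.abs_sub_le hsens) x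
  rwa [div_div_cancel₀ hΔ.ne'] at h
end

section
/- (Adaptive coin-flipping game tail bound.) Let (Ω, 𝓕, ℙ) be a probability space with a filtration (𝓕_i)_{0 ≤ i ≤ m}, let k ≥ 0 be an integer, and for each 1 ≤ i ≤ m let p_i and q_i be 𝓕_{i−1}-measurable random variables with 0 ≤ p_i ≤ 5/6 and p_i/5 ≤ q_i ≤ 1 − p_i almost surely, and let X_i be an 𝓕_i-measurable random variable with values in {0,1,2} such that almost surely ℙ[X_i = 1 ∣ 𝓕_{i−1}] = p_i and ℙ[X_i = 2 ∣ 𝓕_{i−1}] = q_i. Define processes budget_0 = k, reward_0 = 0 and, for 1 ≤ i ≤ m: if X_i = 1 and budget_{i−1} > 0 then reward_i = reward_{i−1} + 1 and budget_i = budget_{i−1}; else if X_i = 2 then budget_i = budget_{i−1} − 1 and reward_i = reward_{i−1}; else both stay unchanged. Then for every λ ∈ ℝ, ℙ[reward_m > λ] ≤ exp(−λ/6 + 3(k+1)). -/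
open MeasureTheory

/-- The multiplicative gain of a reward is at most a fifth of the relative loss of one budget
unit under the potential `exp (reward / 6 + 3 * budget)`. -/
lemma five_mul_exp_sixth_sub_one_le :
    5 * (Real.exp (1 / 6) - 1) ≤ 1 - Real.exp (-3) := by
  have h1 : Real.exp (1 / 6) ≤ 1.185 := by
    refine le_of_pow_le_pow_left₀ (n := 6) (by norm_num) (by norm_num) ?_
    rw [← Real.exp_nat_mul]
    norm_num
    linarith [Real.exp_one_lt_d9]
  have h2 : Real.exp (-3) ≤ 0.075 := by
    have h3 : (2.7 : ℝ) ^ 3 ≤ Real.exp 3 := by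
      have h : Real.exp 3 = Real.exp 1 ^ 3 := by
        rw [← Real.exp_nat_mul]; norm_num
      rw [h]
      gcongr
      linarith [Real.exp_one_gt_d9]
    rw [Real.exp_neg]
    refine inv_le_of_inv_le₀ (by norm_num) (le_trans (by norm_num) h3)
  linarith

/-- Integrating a past-measurable weight against an indicator amounts to integrating it against
the conditional probability of the event. -/
lemma integral_mul_indicator_eq_of_condExp {Ω : Type*} {m m0 : MeasurableSpace Ω}
    {μ : Measure Ω} [IsFiniteMeasure μ] (hm : m ≤ m0) {B r : Ω → ℝ} {s : Set Ω}
    (hB : StronglyMeasurable[m] B) (hBint : Integrable B μ) (hs : MeasurableSet[m0] s)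
    (hr : μ[s.indicator (fun _ => (1 : ℝ)) | m] =ᵐ[μ] r) :
    Integrable (fun ω => B ω * s.indicator (fun _ => (1 : ℝ)) ω) μ ∧
      Integrable (fun ω => B ω * r ω) μ ∧
      ∫ ω, B ω * s.indicator (fun _ => (1 : ℝ)) ω ∂μ = ∫ ω, B ω * r ω ∂μ := by
  have hI : Integrable (B * s.indicator (fun _ => (1 : ℝ))) μ := by
    have h : B * s.indicator (fun _ => (1 : ℝ)) = s.indicator B := by
      ext ω
      by_cases hω : ω ∈ s <;> simp [hω]
    rw [h]
    exact hBint.indicator hs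
  have hc := condExp_mul_of_stronglyMeasurable_left hB hI
    ((integrable_const (1 : ℝ)).indicator hs)
  have hc' : μ[B * s.indicator (fun _ => (1 : ℝ)) | m] =ᵐ[μ] fun ω => B ω * r ω := by
    filter_upwards [hc, hr] with ω h1 h2
    rw [h1, Pi.mul_apply, h2]
  refine ⟨hI, integrable_condExp.congr hc', ?_⟩
  rw [← integral_congr_ae hc', integral_condExp hm]
  rfl

/-- The potential of a game state: exponential in the reward and in the remaining budget. -/
noncomputable def coinPotential (r b : ℤ) : ℝ :=
  Real.exp ((r : ℝ) / 6 + 3 * ((max b 0 : ℤ) : ℝ))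

lemma coinPotential_add_one (r b : ℤ) :
    coinPotential (r + 1) b = coinPotential r b * Real.exp (1 / 6) := by
  rw [coinPotential, coinPotential, ← Real.exp_add]
  push_cast
  ring_nf

lemma coinPotential_sub_one (r : ℤ) {b : ℤ} (hb : 0 < b) :
    coinPotential r (b - 1) = coinPotential r b * Real.exp (-3) := by
  rw [coinPotential, coinPotential, ← Real.exp_add, max_eq_left (by lia), max_eq_left hb.le]
  push_cast
  ring_nf

lemma coinPotential_of_nonpos (r : ℤ) {b : ℤ} (hb : b ≤ 0) :
    coinPotential r b = Real.exp ((r : ℝ) / 6) := by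
  simp [coinPotential, hb]

lemma coinPotential_mono {r r' b b' : ℤ} (hr : r ≤ r') (hb : b ≤ b') :
    coinPotential r b ≤ coinPotential r' b' := by
  unfold coinPotential
  gcongr

/-- Tail bound for the adaptive coin-flipping game: an adaptive adversary with initial
budget `k` (choosing, in each round, a reward bias `p i ∈ [0, 5/6]` and a budget-loss bias
`q i ∈ [p i / 5, 1 − p i]` measurably with respect to the past) collects more than `λ`
rewards with probability at most `exp(−λ/6 + 3(k+1))`. -/
theorem coin_game_tail_bound {Ω : Type*} {m0 : MeasurableSpace Ω}
    (μ : Measure Ω) [IsProbabilityMeasure μ]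
    (𝓕 : Filtration ℕ m0) (m : ℕ) (k : ℕ)
    (p q : ℕ → Ω → ℝ) (X : ℕ → Ω → ℕ)
    (hX_range : ∀ i ω, X i ω ≤ 2)
    (hX_meas : ∀ i, 1 ≤ i → i ≤ m → Measurable[𝓕 i] (X i))
    (hp_meas : ∀ i, 1 ≤ i → i ≤ m → Measurable[𝓕 (i - 1)] (p i))
    (hq_meas : ∀ i, 1 ≤ i → i ≤ m → Measurable[𝓕 (i - 1)] (q i))
    (hp_bound : ∀ i, 1 ≤ i → i ≤ m → ∀ᵐ ω ∂μ, 0 ≤ p i ω ∧ p i ω ≤ 5 / 6)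
    (hq_bound : ∀ i, 1 ≤ i → i ≤ m → ∀ᵐ ω ∂μ, p i ω / 5 ≤ q i ω ∧ q i ω ≤ 1 - p i ω)
    (hcond1 : ∀ i, 1 ≤ i → i ≤ m →
      μ[Set.indicator {ω | X i ω = 1} (fun _ => (1 : ℝ)) | 𝓕 (i - 1)] =ᵐ[μ] p i)
    (hcond2 : ∀ i, 1 ≤ i → i ≤ m →
      μ[Set.indicator {ω | X i ω = 2} (fun _ => (1 : ℝ)) | 𝓕 (i - 1)] =ᵐ[μ] q i)
    (reward budget : ℕ → Ω → ℤ)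
    (hreward0 : ∀ ω, reward 0 ω = 0) (hbudget0 : ∀ ω, budget 0 ω = (k : ℤ))
    (hreward : ∀ i ω, reward (i + 1) ω =
      if X (i + 1) ω = 1 ∧ 0 < budget i ω then reward i ω + 1 else reward i ω)
    (hbudget : ∀ i ω, budget (i + 1) ω =
      if X (i + 1) ω = 2 then budget i ω - 1 else budget i ω) :
    ∀ lam : ℝ, μ {ω | lam < (reward m ω : ℝ)} ≤
      ENNReal.ofReal (Real.exp (-lam / 6 + 3 * (k + 1))) := by
  have hr_le : ∀ i ω, reward i ω ≤ i := by
    intro i ω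
    induction i with
    | zero => simp [hreward0]
    | succ i ih =>
      rw [hreward]
      push_cast
      split_ifs <;> lia
  have hb_le : ∀ i ω, budget i ω ≤ k := by
    intro i ω
    induction i with
    | zero => simp [hbudget0]
    | succ i ih =>
      rw [hbudget]
      split_ifs <;> lia
  have hmeas : ∀ i ≤ m, Measurable[𝓕 i] (reward i) ∧ Measurable[𝓕 i] (budget i) := by
    intro i
    induction i with
    | zero =>
      intro _
      rw [funext hreward0, funext hbudget0]
      exact ⟨measurable_const, measurable_const⟩
    | succ i ih =>
      intro hi
      obtain ⟨hr, hb⟩ := ih (by lia)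
      replace hr := hr.mono (𝓕.mono i.le_succ) le_rfl
      replace hb := hb.mono (𝓕.mono i.le_succ) le_rfl
      have hX := hX_meas (i + 1) (by lia) hi
      rw [funext (hreward i), funext (hbudget i)]
      refine ⟨Measurable.ite ?_ (hr.add_const 1) hr, Measurable.ite ?_ (hb.sub_const 1) hb⟩
      · exact (hX (measurableSet_singleton 1)).inter (hb measurableSet_Ioi)
      · exact hX (measurableSet_singleton 2)
  set Z : ℕ → Ω → ℝ := fun i ω => coinPotential (reward i ω) (budget i ω) with hZ
  have hZ_pos : ∀ i ω, 0 < Z i ω := fun i ω => Real.exp_pos _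
  have hZ_meas : ∀ i ≤ m, Measurable[𝓕 i] (Z i) := by
    intro i hi
    obtain ⟨hr, hb⟩ := hmeas i hi
    exact (measurable_of_countable fun x : ℤ × ℤ => coinPotential x.1 x.2).comp
      (hr.prodMk hb)
  have hZ_int : ∀ i ≤ m, Integrable (Z i) μ := by
    intro i hi
    refine Integrable.of_bound ((hZ_meas i hi).mono (𝓕.le i) le_rfl).aestronglyMeasurable
      (coinPotential i k) (Filter.Eventually.of_forall fun ω => ?_)
    rw [Real.norm_of_nonneg (hZ_pos i ω).le]
    exact coinPotential_mono (hr_le i ω) (hb_le i ω)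
  have hstep : ∀ i, i + 1 ≤ m → ∫ ω, Z (i + 1) ω ∂μ ≤ ∫ ω, Z i ω ∂μ := by
    intro i hi
    have hpos : MeasurableSet[𝓕 i] {ω | 0 < budget i ω} :=
      (hmeas i (by lia)).2 measurableSet_Ioi
    set B : Ω → ℝ := {ω | 0 < budget i ω}.indicator (Z i) with hB
    have hB_meas : StronglyMeasurable[𝓕 i] B :=
      ((hZ_meas i (by lia)).indicator hpos).stronglyMeasurable
    have hB_int : Integrable B μ := (hZ_int i (by lia)).indicator (𝓕.le i _ hpos)
    have hX := (hX_meas (i + 1) (by lia) hi).mono (𝓕.le (i + 1)) le_rfl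
    obtain ⟨hI1, hP, h1⟩ := integral_mul_indicator_eq_of_condExp (𝓕.le i) hB_meas hB_int
      (hX (measurableSet_singleton 1)) (hcond1 (i + 1) (by lia) hi)
    obtain ⟨hI2, hQ, h2⟩ := integral_mul_indicator_eq_of_condExp (𝓕.le i) hB_meas hB_int
      (hX (measurableSet_singleton 2)) (hcond2 (i + 1) (by lia) hi)
    set α := Real.exp (1 / 6) - 1 with hα
    set β := 1 - Real.exp (-3) with hβ
    have hαβ : 5 * α ≤ β := five_mul_exp_sixth_sub_one_le
    have hα0 : 0 ≤ α := sub_nonneg.2 (Real.one_le_exp (by norm_num))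
    have hZ_succ : ∀ ω, Z (i + 1) ω = Z i ω +
        (α * (B ω * (X (i + 1) ⁻¹' {1}).indicator (fun _ => (1 : ℝ)) ω) -
          β * (B ω * (X (i + 1) ⁻¹' {2}).indicator (fun _ => (1 : ℝ)) ω)) := by
      intro ω
      simp only [hZ, hB, Set.indicator_apply, Set.mem_ofPred_eq, hreward, hbudget]
      by_cases hb : 0 < budget i ω
      · by_cases hx1 : X (i + 1) ω = 1
        · simp [hx1, hb, coinPotential_add_one, hα]
          ring
        · by_cases hx2 : X (i + 1) ω = 2
          · simp [hx2, hb, coinPotential_sub_one _ hb, hβ]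
            ring
          · simp [hx1, hx2]
      · by_cases hx2 : X (i + 1) ω = 2
        · simp [hx2, hb, coinPotential_of_nonpos _ (not_lt.1 hb),
            coinPotential_of_nonpos _ (show budget i ω - 1 ≤ 0 by lia)]
        · simp [hx2, hb]
    have hdrift : ∫ ω, (α * (B ω * p (i + 1) ω) - β * (B ω * q (i + 1) ω)) ∂μ ≤ 0 := by
      refine integral_nonpos_of_ae ?_
      filter_upwards [hp_bound (i + 1) (by lia) hi, hq_bound (i + 1) (by lia) hi]
        with ω hp hq
      have hB0 : 0 ≤ B ω := Set.indicator_nonneg (fun ω _ => (hZ_pos i ω).le) ω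
      have h : α * p (i + 1) ω ≤ β * q (i + 1) ω := by
        nlinarith [mul_le_mul_of_nonneg_right hαβ hp.1,
          mul_le_mul_of_nonneg_left hq.1 (show 0 ≤ β by linarith)]
      simp only [Pi.zero_apply]
      nlinarith [mul_le_mul_of_nonneg_left h hB0]
    rw [integral_sub (hP.const_mul α) (hQ.const_mul β), integral_const_mul,
      integral_const_mul, ← h1, ← h2] at hdrift
    have hD : Integrable (fun ω =>
        α * (B ω * (X (i + 1) ⁻¹' {1}).indicator (fun _ => (1 : ℝ)) ω) -
          β * (B ω * (X (i + 1) ⁻¹' {2}).indicator (fun _ => (1 : ℝ)) ω)) μ :=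
      (hI1.const_mul α).sub (hI2.const_mul β)
    simp only [hZ_succ]
    rw [integral_add (hZ_int i (by lia)) hD,
      integral_sub (hI1.const_mul α) (hI2.const_mul β), integral_const_mul, integral_const_mul]
    linarith
  have hbound : ∀ i ≤ m, ∫ ω, Z i ω ∂μ ≤ Real.exp (3 * k) := by
    intro i
    induction i with
    | zero => simp [hZ, hreward0, hbudget0, coinPotential]
    | succ i ih => exact fun hi => (hstep i hi).trans (ih (by lia))
  intro lam
  have hsub : {ω | lam < (reward m ω : ℝ)} ⊆ {ω | Real.exp (lam / 6) ≤ Z m ω} := by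
    intro ω hω
    have hmax : (0 : ℝ) ≤ ((max (budget m ω) 0 : ℤ) : ℝ) := by
      exact_mod_cast le_max_right _ _
    refine Real.exp_le_exp.2 ?_
    have : lam < reward m ω := hω
    linarith
  have hmarkov := mul_meas_ge_le_integral_of_nonneg
    (Filter.Eventually.of_forall fun ω => (hZ_pos m ω).le) (hZ_int m le_rfl)
    (Real.exp (lam / 6))
  refine (measure_mono hsub).trans ?_
  rw [← ofReal_measureReal]
  refine ENNReal.ofReal_le_ofReal ?_
  have hle : μ.real {ω | Real.exp (lam / 6) ≤ Z m ω} ≤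
      Real.exp (3 * k) / Real.exp (lam / 6) := by
    rw [le_div_iff₀' (Real.exp_pos _)]
    exact hmarkov.trans (hbound m le_rfl)
  rw [← Real.exp_sub] at hle
  exact hle.trans (Real.exp_le_exp.2 (by linarith))
end

section
/- (Basic composition for product measures.) Let (μ_1, ν_1) and (μ_2, ν_2) be pairs of probability measures on measurable spaces Ω_1 and Ω_2 respectively, with μ_1 ≈_{(ε_1,δ_1)} ν_1 and μ_2 ≈_{(ε_2,δ_2)} ν_2. Then the product measures satisfy μ_1 ⊗ μ_2 ≈_{(ε_1+ε_2, δ_1+δ_2)} ν_1 ⊗ ν_2. -/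
open MeasureTheory

open scoped ENNReal

/-- A one-sided approximate domination of measures on sets extends to measurable functions
bounded by one. -/
lemma lintegral_le_mul_lintegral_add {Ω : Type*} [MeasurableSpace Ω] {μ ν : Measure Ω}
    {c d : ℝ≥0∞} (h : ∀ F, MeasurableSet F → μ F ≤ c * ν F + d)
    {g : Ω → ℝ≥0∞} (hg : Measurable g) (hg1 : ∀ x, g x ≤ 1) :
    ∫⁻ x, g x ∂μ ≤ c * ∫⁻ x, g x ∂ν + d := by
  have hreal : Measurable fun x => (g x).toReal := hg.ennreal_toReal
  have layer (ρ : Measure Ω) :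
      ∫⁻ x, g x ∂ρ = ∫⁻ t in Set.Ioi (0 : ℝ), ρ {x | t < (g x).toReal} := by
    rw [← lintegral_eq_lintegral_meas_lt ρ (.of_forall fun _ => ENNReal.toReal_nonneg)
      hreal.aemeasurable]
    exact lintegral_congr fun x =>
      (ENNReal.ofReal_toReal ((hg1 x).trans_lt ENNReal.one_lt_top).ne).symm
  have hanti : Measurable fun t : ℝ => ν {x | t < (g x).toReal} :=
    Antitone.measurable fun s t hst => measure_mono fun x hx => lt_of_le_of_lt hst hx
  rw [layer μ, layer ν]
  calc ∫⁻ t in Set.Ioi (0 : ℝ), μ {x | t < (g x).toReal}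
      ≤ ∫⁻ t in Set.Ioi (0 : ℝ),
          (c * ν {x | t < (g x).toReal} + (Set.Iio (1 : ℝ)).indicator (fun _ => d) t) := by
        refine lintegral_mono fun t => ?_
        by_cases ht : t < 1
        · simpa [ht] using h _ (measurableSet_lt measurable_const hreal)
        · have hempty : {x | t < (g x).toReal} = ∅ := by
            ext x
            have := ENNReal.toReal_mono ENNReal.one_ne_top (hg1 x)
            simp only [ENNReal.toReal_one] at this
            simp only [Set.mem_ofPred_eq, Set.mem_empty_iff_false, iff_false, not_lt]
            linarith
          simp [hempty]
    _ = c * (∫⁻ t in Set.Ioi (0 : ℝ), ν {x | t < (g x).toReal}) + d := by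
        rw [lintegral_add_left (hanti.const_mul c), lintegral_const_mul c hanti,
          lintegral_indicator_const measurableSet_Iio,
          Measure.restrict_apply measurableSet_Iio, Set.Iio_inter_Ioi]
        simp

/-- One-sided composition of approximate dominations for product measures. -/
lemma prod_apply_le_mul_add {Ω₁ Ω₂ : Type*} [MeasurableSpace Ω₁] [MeasurableSpace Ω₂]
    {μ₁ ν₁ : Measure Ω₁} {μ₂ ν₂ : Measure Ω₂}
    [IsProbabilityMeasure μ₁] [IsProbabilityMeasure μ₂] [SFinite ν₂]
    {c₁ c₂ d₁ d₂ : ℝ≥0∞}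
    (h₁ : ∀ F, MeasurableSet F → μ₁ F ≤ c₁ * ν₁ F + d₁)
    (h₂ : ∀ F, MeasurableSet F → μ₂ F ≤ c₂ * ν₂ F + d₂)
    {F : Set (Ω₁ × Ω₂)} (hF : MeasurableSet F) :
    μ₁.prod μ₂ F ≤ c₁ * c₂ * ν₁.prod ν₂ F + (d₁ + d₂) := by
  have hν : Measurable fun x => ν₂ (Prod.mk x ⁻¹' F) := measurable_measure_prodMk_left hF
  have hg : Measurable fun x => min 1 (c₂ * ν₂ (Prod.mk x ⁻¹' F)) :=
    measurable_const.min (hν.const_mul c₂)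
  rw [Measure.prod_apply hF, Measure.prod_apply hF]
  calc ∫⁻ x, μ₂ (Prod.mk x ⁻¹' F) ∂μ₁
      ≤ ∫⁻ x, (min 1 (c₂ * ν₂ (Prod.mk x ⁻¹' F)) + d₂) ∂μ₁ := by
        refine lintegral_mono fun x => ?_
        rw [min_add]
        exact le_min (prob_le_one.trans le_self_add) (h₂ _ (measurable_prodMk_left hF))
    _ = ∫⁻ x, min 1 (c₂ * ν₂ (Prod.mk x ⁻¹' F)) ∂μ₁ + d₂ := by
        rw [lintegral_add_left hg]
        simp
    _ ≤ c₁ * ∫⁻ x, min 1 (c₂ * ν₂ (Prod.mk x ⁻¹' F)) ∂ν₁ + d₁ + d₂ := by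
        gcongr
        exact lintegral_le_mul_lintegral_add h₁ hg fun x => min_le_left _ _
    _ ≤ c₁ * ∫⁻ x, c₂ * ν₂ (Prod.mk x ⁻¹' F) ∂ν₁ + d₁ + d₂ := by
        gcongr
        exact min_le_right _ _
    _ = c₁ * c₂ * ∫⁻ x, ν₂ (Prod.mk x ⁻¹' F) ∂ν₁ + (d₁ + d₂) := by
        rw [lintegral_const_mul c₂ hν, mul_assoc, add_assoc]

/-- Basic composition for product measures: if `μ₁ ≈_{(ε₁,δ₁)} ν₁` and `μ₂ ≈_{(ε₂,δ₂)} ν₂`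
then `μ₁ ⊗ μ₂ ≈_{(ε₁+ε₂, δ₁+δ₂)} ν₁ ⊗ ν₂`. -/
theorem approxIndist_prod {Ω₁ Ω₂ : Type*} [MeasurableSpace Ω₁] [MeasurableSpace Ω₂]
    (μ₁ ν₁ : Measure Ω₁) (μ₂ ν₂ : Measure Ω₂)
    [IsProbabilityMeasure μ₁] [IsProbabilityMeasure ν₁]
    [IsProbabilityMeasure μ₂] [IsProbabilityMeasure ν₂]
    (ε₁ ε₂ δ₁ δ₂ : ℝ) (hε₁ : 0 ≤ ε₁) (hε₂ : 0 ≤ ε₂) (hδ₁ : 0 ≤ δ₁) (hδ₂ : 0 ≤ δ₂)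
    (h₁ : ApproxIndist ε₁ δ₁ μ₁ ν₁) (h₂ : ApproxIndist ε₂ δ₂ μ₂ ν₂) :
    ApproxIndist (ε₁ + ε₂) (δ₁ + δ₂) (μ₁.prod μ₂) (ν₁.prod ν₂) := by
  intro F hF
  rw [Real.exp_add, ENNReal.ofReal_mul (Real.exp_nonneg _), ENNReal.ofReal_add hδ₁ hδ₂]
  exact ⟨prod_apply_le_mul_add (fun F hF => (h₁ F hF).1) (fun F hF => (h₂ F hF).1) hF,
    prod_apply_le_mul_add (fun F hF => (h₁ F hF).2) (fun F hF => (h₂ F hF).2) hF⟩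
end

section
/- (Advanced composition for product measures; non-adaptive core of the paper's composition theorem for challenge differential privacy.) Let ε > 0, δ ≥ 0, δ' > 0, let m be a positive integer, and for each 1 ≤ ℓ ≤ m let μ_ℓ and ν_ℓ be probability measures on a measurable space Ω_ℓ with μ_ℓ ≈_{(ε,δ)} ν_ℓ. Then the m-fold product measures satisfy ⊗_{ℓ=1}^m μ_ℓ ≈_{(ε', mδ + δ')} ⊗_{ℓ=1}^m ν_ℓ, where ε' = √(2m·ln(1/δ'))·ε + m·ε·(e^ε − 1). -/
open MeasureTheory

open ProbabilityTheory

section ProductMeasures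

/-- Product measures are monotone in their factors. -/
theorem measure_pi_mono {ι : Type*} [Fintype ι] {Ω : ι → Type*} [∀ i, MeasurableSpace (Ω i)]
    {μ ν : ∀ i, Measure (Ω i)} [∀ i, SigmaFinite (μ i)] (h : ∀ i, μ i ≤ ν i) :
    Measure.pi μ ≤ Measure.pi ν := by
  rw [Measure.le_iff]
  intro s hs
  have key : (Measure.pi μ).toOuterMeasure ≤
      OuterMeasure.pi fun i => (ν i).toOuterMeasure := by
    rw [OuterMeasure.le_pi]
    intro t _
    refine (Measure.pi_pi μ t).le.trans ?_
    exact Finset.prod_le_prod' fun i _ => h i (t i)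
  refine (key s).trans ?_
  rw [Measure.pi, toMeasure_apply _ _ hs]

/-- A product of measures with densities has the product density. -/
theorem measure_pi_withDensity {ι : Type*} [Fintype ι] {Ω : ι → Type*}
    [∀ i, MeasurableSpace (Ω i)] (Q : ∀ i, Measure (Ω i)) [∀ i, IsProbabilityMeasure (Q i)]
    {w : ∀ i, Ω i → ENNReal} (hw : ∀ i, Measurable (w i))
    [∀ i, SigmaFinite ((Q i).withDensity (w i))] :
    Measure.pi (fun i => (Q i).withDensity (w i)) =
      (Measure.pi Q).withDensity (fun x => ∏ i, w i (x i)) := by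
  refine Measure.pi_eq fun s hs => ?_
  rw [withDensity_apply _ (MeasurableSet.univ_pi hs),
    ← lintegral_indicator (MeasurableSet.univ_pi hs)]
  have hind : ∀ x : ∀ i, Ω i, (Set.univ.pi s).indicator (fun x => ∏ i, w i (x i)) x =
      ∏ i, (s i).indicator (w i) (x i) := by
    intro x
    by_cases hx : x ∈ Set.univ.pi s
    · rw [Set.indicator_of_mem hx]
      exact Finset.prod_congr rfl fun i _ =>
        (Set.indicator_of_mem (hx i (Set.mem_univ i)) _).symm
    · rw [Set.indicator_of_notMem hx]
      simp only [Set.mem_univ_pi, not_forall] at hx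
      obtain ⟨i, hi⟩ := hx
      exact (Finset.prod_eq_zero (Finset.mem_univ i) (Set.indicator_of_notMem hi _)).symm
  simp_rw [hind]
  have hm : ∀ i, Measurable ((s i).indicator (w i)) := fun i => (hw i).indicator (hs i)
  rw [lintegral_prod_eq_prod_lintegral_of_indepFun Finset.univ
    (fun i (x : ∀ i, Ω i) => (s i).indicator (w i) (x i))
    (iIndepFun_pi fun i => (hm i).aemeasurable)
    (fun i => (hm i).comp (measurable_pi_apply i))]
  refine Finset.prod_congr rfl fun i _ => ?_
  rw [withDensity_apply _ (hs i), ← lintegral_indicator (hs i)]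
  exact (measurePreserving_eval Q i).lintegral_comp (hm i)

end ProductMeasures

section PrivacyLoss

/-- The Kullback–Leibler bound: a log-likelihood ratio bounded by `ε` has mean at most
`ε (e^ε - 1)` under the tilted measure. -/
theorem integral_logRatio_le {Ω : Type*} [MeasurableSpace Ω] (Q : Measure Ω)
    [IsProbabilityMeasure Q] {L : Ω → ℝ} (hL : Measurable L) {ε : ℝ}
    (hLε : ∀ x, |L x| ≤ ε)
    [IsProbabilityMeasure (Q.withDensity fun x => ENNReal.ofReal (Real.exp (L x)))] :
    ∫ x, L x ∂(Q.withDensity fun x => ENNReal.ofReal (Real.exp (L x))) ≤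
      ε * (Real.exp ε - 1) := by
  have hbdd : ∀ x, Real.exp (L x) ≤ Real.exp ε := fun x =>
    Real.exp_le_exp.2 ((le_abs_self _).trans (hLε x))
  have hint : Integrable (fun x => Real.exp (L x)) Q := by
    refine Integrable.of_bound hL.exp.aestronglyMeasurable (Real.exp ε) (ae_of_all _ fun x => ?_)
    rw [Real.norm_of_nonneg (Real.exp_pos _).le]
    exact hbdd x
  have hone : ∫ x, Real.exp (L x) ∂Q = 1 := by
    have h1 := measure_univ (μ := Q.withDensity fun x => ENNReal.ofReal (Real.exp (L x)))
    rw [withDensity_apply _ MeasurableSet.univ, Measure.restrict_univ] at h1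
    rw [integral_eq_lintegral_of_nonneg_ae (ae_of_all _ fun x => (Real.exp_pos _).le)
      hL.exp.aestronglyMeasurable, h1, ENNReal.toReal_one]
  rw [integral_withDensity_eq_integral_toReal_smul hL.exp.ennreal_ofReal
    (ae_of_all _ fun x => ENNReal.ofReal_lt_top)]
  have hpt : ∀ x, (ENNReal.ofReal (Real.exp (L x))).toReal • L x ≤
      (Real.exp (L x) - 1) + ε * (Real.exp ε - 1) := by
    intro x
    rw [ENNReal.toReal_ofReal (Real.exp_pos _).le, smul_eq_mul]
    have h1 := Real.add_one_le_exp (L x)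
    have hε : 0 ≤ ε := (abs_nonneg _).trans (hLε x)
    have h4 := Real.add_one_le_exp (-ε)
    have hε1 := Real.add_one_le_exp ε
    have hprod : (Real.exp (L x) - 1) * L x ≤ ε * (Real.exp ε - 1) := by
      rcases le_total 0 (L x) with h0 | h0
      · have : L x ≤ ε := (le_abs_self _).trans (hLε x)
        nlinarith [hbdd x]
      · have : -ε ≤ L x := (abs_le.1 (hLε x)).1
        have h5 : Real.exp (L x) ≤ 1 := Real.exp_le_one_iff.2 h0
        nlinarith
    linarith
  have hlhs : Integrable (fun x => (ENNReal.ofReal (Real.exp (L x))).toReal • L x) Q := by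
    refine Integrable.of_bound (C := Real.exp ε * ε)
      (hL.exp.ennreal_ofReal.ennreal_toReal.smul hL).aestronglyMeasurable
      (ae_of_all _ fun x => ?_)
    rw [norm_smul, ENNReal.toReal_ofReal (Real.exp_pos _).le,
      Real.norm_of_nonneg (Real.exp_pos _).le]
    exact mul_le_mul (hbdd x) (hLε x) (norm_nonneg _) (Real.exp_pos _).le
  have hdiff : Integrable (fun x => Real.exp (L x) - 1) Q := hint.sub (integrable_const _)
  refine (integral_mono hlhs (hdiff.add (integrable_const (ε * (Real.exp ε - 1)))) hpt).trans ?_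
  rw [integral_add' hdiff (integrable_const _), integral_sub hint (integrable_const _), hone]
  simp

/-- Hoeffding tail bound for the total privacy loss of a product of tilted measures. -/
theorem measureReal_sum_logRatio_ge_le {m : ℕ} (hm : 0 < m) {Ω : Fin m → Type*}
    [∀ i, MeasurableSpace (Ω i)] (Q : ∀ i, Measure (Ω i)) [∀ i, IsProbabilityMeasure (Q i)]
    {L : ∀ i, Ω i → ℝ} (hL : ∀ i, Measurable (L i)) {ε : ℝ} (hε : 0 < ε)
    (hLε : ∀ i x, |L i x| ≤ ε)
    [∀ i, IsProbabilityMeasure ((Q i).withDensity fun x => ENNReal.ofReal (Real.exp (L i x)))]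
    {δ' : ℝ} (hδ' : 0 < δ') (hδ'_le : δ' ≤ 1) :
    (Measure.pi fun i => (Q i).withDensity fun x => ENNReal.ofReal (Real.exp (L i x))).real
      {x | Real.sqrt (2 * m * Real.log (1 / δ')) * ε + m * ε * (Real.exp ε - 1) ≤
        ∑ i, L i (x i)} ≤ δ' := by
  set P : ∀ i, Measure (Ω i) :=
    fun i => (Q i).withDensity fun x => ENNReal.ofReal (Real.exp (L i x))
  have hmean : ∀ i, ∫ x, L i x ∂(P i) ≤ ε * (Real.exp ε - 1) := fun i =>
    integral_logRatio_le (Q i) (hL i) (hLε i)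
  have hX : ∀ i, Measurable fun y => L i y - ∫ z, L i z ∂(P i) := fun i =>
    (hL i).sub_const _
  have hsub : ∀ i ∈ Finset.univ, HasSubgaussianMGF
      (fun x : ∀ i, Ω i => L i (x i) - ∫ z, L i z ∂(P i))
      ((‖ε - -ε‖₊ / 2) ^ 2) (Measure.pi P) := by
    intro i _
    refine HasSubgaussianMGF.of_map (Y := fun x : ∀ i, Ω i => x i)
      (X := fun y => L i y - ∫ z, L i z ∂(P i)) (measurable_pi_apply i).aemeasurable ?_
    have hmap : (Measure.pi P).map (fun x : ∀ i, Ω i => x i) = P i :=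
      (measurePreserving_eval P i).map_eq
    rw [hmap]
    exact hasSubgaussianMGF_of_mem_Icc (hL i).aemeasurable
      (ae_of_all _ fun x => abs_le.1 (hLε i x))
  have hlog : 0 ≤ Real.log (1 / δ') := Real.log_nonneg (by rw [le_div_iff₀ hδ']; linarith)
  have hm' : (0 : ℝ) < m := by exact_mod_cast hm
  have htail := HasSubgaussianMGF.measure_sum_ge_le_of_iIndepFun
    (iIndepFun_pi (μ := P) fun i => (hX i).aemeasurable) hsub
    (ε := Real.sqrt (2 * m * Real.log (1 / δ')) * ε) (by positivity)
  refine (measureReal_mono ?_).trans (htail.trans_eq ?_)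
  · intro x hx
    simp only [Set.mem_ofPred_eq, Finset.sum_sub_distrib] at hx ⊢
    have : ∑ i, ∫ z, L i z ∂(P i) ≤ m * ε * (Real.exp ε - 1) := by
      refine (Finset.sum_le_sum fun i _ => hmean i).trans_eq ?_
      simp [mul_assoc]
    linarith
  · have hc : ‖ε - -ε‖ = 2 * ε := by
      rw [Real.norm_of_nonneg (by linarith)]
      ring
    have hexp : -(Real.sqrt (2 * m * Real.log (1 / δ')) * ε) ^ 2 /
        (2 * ((∑ _i : Fin m, (‖ε - -ε‖₊ / 2) ^ 2 : NNReal) : ℝ)) = Real.log δ' := by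
      rw [mul_pow, Real.sq_sqrt (by positivity)]
      push_cast
      rw [hc, Finset.sum_const, Finset.card_univ, Fintype.card_fin, nsmul_eq_mul, one_div,
        Real.log_inv]
      field_simp
    rw [hexp, Real.exp_log hδ']

/-- Advanced composition in one direction when all the log-likelihood ratios are bounded. -/
theorem measure_pi_tilted_le {m : ℕ} (hm : 0 < m) {Ω : Fin m → Type*}
    [∀ i, MeasurableSpace (Ω i)] (Q : ∀ i, Measure (Ω i)) [∀ i, IsProbabilityMeasure (Q i)]
    {L : ∀ i, Ω i → ℝ} (hL : ∀ i, Measurable (L i)) {ε : ℝ} (hε : 0 < ε)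
    (hLε : ∀ i x, |L i x| ≤ ε)
    [∀ i, IsProbabilityMeasure ((Q i).withDensity fun x => ENNReal.ofReal (Real.exp (L i x)))]
    {δ' : ℝ} (hδ' : 0 < δ') (hδ'_le : δ' ≤ 1) {F : Set (∀ i, Ω i)} (hF : MeasurableSet F) :
    (Measure.pi fun i => (Q i).withDensity fun x => ENNReal.ofReal (Real.exp (L i x))) F ≤
      ENNReal.ofReal (Real.exp (Real.sqrt (2 * m * Real.log (1 / δ')) * ε +
        m * ε * (Real.exp ε - 1))) * Measure.pi Q F + ENNReal.ofReal δ' := by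
  have htail := measureReal_sum_logRatio_ge_le hm Q hL hε hLε hδ' hδ'_le
  set ε' := Real.sqrt (2 * m * Real.log (1 / δ')) * ε + m * ε * (Real.exp ε - 1)
  set B : Set (∀ i, Ω i) := {x | ε' ≤ ∑ i, L i (x i)}
  have hB : MeasurableSet B := measurableSet_le measurable_const
    (Finset.measurable_sum _ fun i _ => (hL i).comp (measurable_pi_apply i))
  rw [← measure_sdiff_add_inter F hB]
  refine add_le_add ?_ ((measure_mono Set.inter_subset_right).trans ?_)
  · rw [measure_pi_withDensity Q fun i => (hL i).exp.ennreal_ofReal,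
      withDensity_apply _ (hF.diff hB)]
    calc ∫⁻ x in F \ B, ∏ i, ENNReal.ofReal (Real.exp (L i (x i))) ∂Measure.pi Q
        ≤ ∫⁻ _ in F \ B, ENNReal.ofReal (Real.exp ε') ∂Measure.pi Q := by
          refine setLIntegral_mono measurable_const fun x hx => ?_
          rw [← ENNReal.ofReal_prod_of_nonneg fun i _ => (Real.exp_pos _).le, ← Real.exp_sum]
          exact ENNReal.ofReal_le_ofReal (Real.exp_le_exp.2 (not_le.1 hx.2).le)
      _ ≤ ENNReal.ofReal (Real.exp ε') * Measure.pi Q F := by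
          rw [setLIntegral_const]
          gcongr
          exact Set.sdiff_subset
  · rw [← ofReal_measureReal]
    exact ENNReal.ofReal_le_ofReal htail

end PrivacyLoss

section Decomposition

/-- Between two ordered integrable functions there is one of every intermediate integral. -/
theorem exists_between_integral_eq {Ω : Type*} [MeasurableSpace Ω] {μ : Measure Ω}
    {r p : Ω → ℝ} (hr : Measurable r) (hp : Measurable p) (hri : Integrable r μ)
    (hpi : Integrable p μ) (hrp : ∀ x, r x ≤ p x) {c : ℝ} (hrc : ∫ x, r x ∂μ ≤ c)
    (hcp : c ≤ ∫ x, p x ∂μ) :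
    ∃ u : Ω → ℝ, Measurable u ∧ Integrable u μ ∧ (∀ x, r x ≤ u x) ∧ (∀ x, u x ≤ p x) ∧
      ∫ x, u x ∂μ = c := by
  obtain ⟨s, t, hs, ht, hst, hc⟩ : c ∈ segment ℝ (∫ x, r x ∂μ) (∫ x, p x ∂μ) := by
    rw [segment_eq_Icc (hrc.trans hcp)]
    exact ⟨hrc, hcp⟩
  refine ⟨fun x => s * r x + t * p x, by fun_prop, (hri.const_mul s).add (hpi.const_mul t),
    fun x => ?_, fun x => ?_, ?_⟩
  · calc r x = s * r x + t * r x := by rw [← add_mul, hst, one_mul]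
      _ ≤ s * r x + t * p x := by gcongr; exact hrp x
  · calc s * r x + t * p x ≤ s * p x + t * p x := by gcongr; exact hrp x
      _ = p x := by rw [← add_mul, hst, one_mul]
  · rw [integral_add (hri.const_mul s) (hpi.const_mul t), integral_const_mul,
      integral_const_mul, ← hc, smul_eq_mul, smul_eq_mul]

/-- Truncating the density `f` at `a * g` loses mass at most `δ` if the measure with density `f` is
at most `a` times the measure with density `g` plus `δ`. -/
theorem one_sub_le_integral_min {Ω : Type*} [MeasurableSpace Ω] {μ : Measure Ω} {f g : Ω → ℝ}
    (hf : Measurable f) (hg : Measurable g) (hfi : Integrable f μ) (hgi : Integrable g μ)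
    {a δ : ℝ} (hone : ∫ x, f x ∂μ = 1)
    (h : ∀ F, MeasurableSet F → ∫ x in F, f x ∂μ ≤ a * ∫ x in F, g x ∂μ + δ) :
    1 - δ ≤ ∫ x, min (f x) (a * g x) ∂μ := by
  have hS : MeasurableSet {x | a * g x < f x} := measurableSet_lt (hg.const_mul a) hf
  have hag : Integrable (fun x => a * g x) μ := hgi.const_mul a
  have hmin : ∀ x, min (f x) (a * g x) =
      f x - {x | a * g x < f x}.indicator (fun x => f x - a * g x) x := by
    intro x
    by_cases hx : a * g x < f x
    · rw [Set.indicator_of_mem (show x ∈ {x | a * g x < f x} from hx), min_eq_right hx.le]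
      ring
    · rw [Set.indicator_of_notMem (show x ∉ {x | a * g x < f x} from hx),
        min_eq_left (not_lt.1 hx), sub_zero]
  have hdiff : Integrable (fun x => f x - a * g x) μ := hfi.sub hag
  simp_rw [hmin]
  rw [integral_sub hfi (hdiff.indicator hS), integral_indicator hS,
    integral_sub hfi.integrableOn hag.integrableOn, integral_const_mul, hone]
  linarith [h _ hS]

/-- If `μ` and `ν` are `(ε, δ)`-indistinguishable with `δ < 1`, then they have common parts of mass
`1 - δ` whose log-likelihood ratio is bounded by `ε`. -/
theorem ApproxIndist.exists_logRatio {Ω : Type*} [MeasurableSpace Ω] {μ ν : Measure Ω}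
    [IsProbabilityMeasure μ] [IsProbabilityMeasure ν] {ε δ : ℝ} (hε : 0 < ε) (hδ : 0 ≤ δ)
    (hδ1 : δ < 1) (h : ApproxIndist ε δ μ ν) :
    ∃ (Q : Measure Ω) (L : Ω → ℝ), IsProbabilityMeasure Q ∧ Measurable L ∧
      (∀ x, |L x| ≤ ε) ∧
      IsProbabilityMeasure (Q.withDensity fun x => ENNReal.ofReal (Real.exp (L x))) ∧
      ENNReal.ofReal (1 - δ) • (Q.withDensity fun x => ENNReal.ofReal (Real.exp (L x))) ≤ μ ∧
      ENNReal.ofReal (1 - δ) • Q ≤ ν := by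
  set κ := μ + ν
  set f : Ω → ℝ := fun x => (μ.rnDeriv κ x).toReal
  set g : Ω → ℝ := fun x => (ν.rnDeriv κ x).toReal
  have hμκ : μ ≪ κ := Measure.absolutelyContinuous_of_le (Measure.le_add_right le_rfl)
  have hνκ : ν ≪ κ := Measure.absolutelyContinuous_of_le (Measure.le_add_left le_rfl)
  have hf : Measurable f := (Measure.measurable_rnDeriv μ κ).ennreal_toReal
  have hg : Measurable g := (Measure.measurable_rnDeriv ν κ).ennreal_toReal
  have hf0 : ∀ x, 0 ≤ f x := fun x => ENNReal.toReal_nonneg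
  have hg0 : ∀ x, 0 ≤ g x := fun x => ENNReal.toReal_nonneg
  have hfi : Integrable f κ := Measure.integrable_toReal_rnDeriv
  have hgi : Integrable g κ := Measure.integrable_toReal_rnDeriv
  have hfs : ∀ F, ∫ x in F, f x ∂κ = μ.real F := fun F => Measure.setIntegral_toReal_rnDeriv hμκ F
  have hgs : ∀ F, ∫ x in F, g x ∂κ = ν.real F := fun F => Measure.setIntegral_toReal_rnDeriv hνκ F
  have hf1 : ∫ x, f x ∂κ = 1 := by simpa using hfs Set.univ
  have hg1 : ∫ x, g x ∂κ = 1 := by simpa using hgs Set.univ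
  have ha1 : 1 ≤ Real.exp ε := Real.one_le_exp hε.le
  have toReal : ∀ (μ ν : Measure Ω) [IsProbabilityMeasure μ] [IsProbabilityMeasure ν] (F : Set Ω),
      μ F ≤ ENNReal.ofReal (Real.exp ε) * ν F + ENNReal.ofReal δ →
      μ.real F ≤ Real.exp ε * ν.real F + δ := by
    intro μ ν _ _ F hle
    rw [← ofReal_measureReal (μ := μ), ← ofReal_measureReal (μ := ν),
      ← ENNReal.ofReal_mul (Real.exp_pos _).le,
      ← ENNReal.ofReal_add (by positivity) hδ] at hle
    exact (ENNReal.ofReal_le_ofReal_iff (by positivity)).1 hle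
  have hP : 1 - δ ≤ ∫ x, min (f x) (Real.exp ε * g x) ∂κ :=
    one_sub_le_integral_min hf hg hfi hgi hf1 fun F hF => by
      rw [hfs, hgs]; exact toReal μ ν F (h F hF).1
  have hQ : 1 - δ ≤ ∫ x, min (g x) (Real.exp ε * f x) ∂κ :=
    one_sub_le_integral_min hg hf hgi hfi hg1 fun F hF => by
      rw [hfs, hgs]; exact toReal ν μ F (h F hF).2
  have hri : Integrable (fun x => min (f x) (g x)) κ := hfi.inf hgi
  have hpi : Integrable (fun x => min (f x) (Real.exp ε * g x)) κ := hfi.inf (hgi.const_mul _)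
  have hqi : Integrable (fun x => min (g x) (Real.exp ε * f x)) κ := hgi.inf (hfi.const_mul _)
  have hrp : ∀ x, min (f x) (g x) ≤ min (f x) (Real.exp ε * g x) := fun x =>
    min_le_min le_rfl (le_mul_of_one_le_left (hg0 x) ha1)
  have hrq : ∀ x, min (f x) (g x) ≤ min (g x) (Real.exp ε * f x) := fun x => by
    rw [min_comm]
    exact min_le_min le_rfl (le_mul_of_one_le_left (hf0 x) ha1)
  set c := max (∫ x, min (f x) (g x) ∂κ) (1 - δ)
  have hc : 0 < c := lt_of_lt_of_le (by linarith) (le_max_right _ _)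
  obtain ⟨p, hpm, hpi', hrp', hpf, hpc⟩ := exists_between_integral_eq (c := c)
    (hf.min hg) (hf.min (hg.const_mul _)) hri hpi hrp (le_max_left _ _)
    (max_le (integral_mono hri hpi hrp) hP)
  obtain ⟨q, hqm, hqi', hrq', hqg, hqc⟩ := exists_between_integral_eq (c := c)
    (hf.min hg) (hg.min (hf.const_mul _)) hri hqi hrq (le_max_left _ _)
    (max_le (integral_mono hri hqi hrq) hQ)
  have hr0 : ∀ x, 0 ≤ min (f x) (g x) := fun x => le_min (hf0 x) (hg0 x)
  have hp0 : ∀ x, 0 ≤ p x := fun x => (hr0 x).trans (hrp' x)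
  have hq0 : ∀ x, 0 ≤ q x := fun x => (hr0 x).trans (hrq' x)
  have hpq : ∀ x, p x ≤ Real.exp ε * q x := fun x => by
    refine le_trans ?_ (mul_le_mul_of_nonneg_left (hrq' x) (Real.exp_pos ε).le)
    rw [mul_min_of_nonneg _ _ (Real.exp_pos ε).le]
    exact (hpf x).trans (min_le_min (le_mul_of_one_le_left (hf0 x) ha1) le_rfl)
  have hqp : ∀ x, q x ≤ Real.exp ε * p x := fun x => by
    refine le_trans ?_ (mul_le_mul_of_nonneg_left (hrp' x) (Real.exp_pos ε).le)
    rw [mul_min_of_nonneg _ _ (Real.exp_pos ε).le, min_comm]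
    exact (hqg x).trans (min_le_min (le_mul_of_one_le_left (hg0 x) ha1) le_rfl)
  have hprob : ∀ u : Ω → ℝ, (∀ x, 0 ≤ u x) → Integrable u κ → ∫ x, u x ∂κ = c →
      IsProbabilityMeasure (κ.withDensity fun x => ENNReal.ofReal (u x / c)) := by
    intro u hu0 hui huc
    refine ⟨?_⟩
    rw [withDensity_apply _ MeasurableSet.univ, Measure.restrict_univ,
      ← ofReal_integral_eq_lintegral_ofReal (hui.div_const c)
        (ae_of_all _ fun x => div_nonneg (hu0 x) hc.le),
      integral_div, huc, div_self hc.ne', ENNReal.ofReal_one]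
  have hle : ∀ (ρ : Measure Ω) [IsProbabilityMeasure ρ] (u : Ω → ℝ), ρ ≪ κ → Measurable u →
      (∀ x, 0 ≤ u x) → (∀ x, u x ≤ (ρ.rnDeriv κ x).toReal) →
      ENNReal.ofReal (1 - δ) • (κ.withDensity fun x => ENNReal.ofReal (u x / c)) ≤ ρ := by
    intro ρ _ u hρ hum hu0 hu
    rw [← withDensity_smul _ (hum.div_const c).ennreal_ofReal]
    conv_rhs => rw [← Measure.withDensity_rnDeriv_eq ρ κ hρ]
    refine withDensity_mono (ae_of_all _ fun x => ?_)
    rw [Pi.smul_apply, smul_eq_mul, ← ENNReal.ofReal_mul (by linarith)]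
    refine le_trans (ENNReal.ofReal_le_ofReal ?_) ENNReal.ofReal_toReal_le
    refine le_trans ?_ (hu x)
    rw [mul_div_assoc', div_le_iff₀ hc, mul_comm]
    exact mul_le_mul_of_nonneg_left (le_max_right _ _) (hu0 x)
  have htilt : ((κ.withDensity fun x => ENNReal.ofReal (q x / c)).withDensity
      fun x => ENNReal.ofReal (Real.exp (Real.log (p x / q x)))) =
      κ.withDensity fun x => ENNReal.ofReal (p x / c) := by
    have hlog : Measurable fun x => Real.log (p x / q x) := (hpm.div hqm).log
    rw [← withDensity_mul _ (hqm.div_const c).ennreal_ofReal hlog.exp.ennreal_ofReal]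
    congr 1
    funext x
    rw [Pi.mul_apply, ← ENNReal.ofReal_mul (div_nonneg (hq0 x) hc.le)]
    congr 1
    rcases (hq0 x).eq_or_lt with hq | hq
    · have : p x = 0 := le_antisymm (by simpa [← hq] using hpq x) (hp0 x)
      simp [← hq, this]
    · have hppos : 0 < p x := pos_of_mul_pos_right (hq.trans_le (hqp x)) (Real.exp_pos ε).le
      rw [Real.exp_log (div_pos hppos hq)]
      field_simp
  refine ⟨κ.withDensity fun x => ENNReal.ofReal (q x / c), fun x => Real.log (p x / q x),
    hprob q hq0 hqi' hqc, (hpm.div hqm).log, fun x => ?_, ?_, ?_, ?_⟩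
  · rcases (hq0 x).eq_or_lt with hq | hq
    · simp [← hq, hε.le]
    · have hppos : 0 < p x := pos_of_mul_pos_right (hq.trans_le (hqp x)) (Real.exp_pos ε).le
      rw [abs_le]
      constructor
      · rw [Real.le_log_iff_exp_le (div_pos hppos hq), le_div_iff₀ hq, Real.exp_neg,
          inv_mul_le_iff₀ (Real.exp_pos ε)]
        exact hqp x
      · rw [Real.log_le_iff_le_exp (div_pos hppos hq), div_le_iff₀ hq]
        exact hpq x
  · rw [htilt]
    exact hprob p hp0 hpi' hpc
  · rw [htilt]
    exact hle μ p hμκ hpm hp0 fun x => (hpf x).trans (min_le_left _ _)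
  · exact hle ν q hνκ hqm hq0 fun x => (hqg x).trans (min_le_left _ _)

end Decomposition

theorem ApproxIndist.symm {Ω : Type*} [MeasurableSpace Ω] {ε δ : ℝ} {μ ν : Measure Ω}
    (h : ApproxIndist ε δ μ ν) : ApproxIndist ε δ ν μ :=
  fun F hF => ⟨(h F hF).2, (h F hF).1⟩

/-- One direction of advanced composition. -/
theorem measure_pi_le_of_approxIndist {m : ℕ} (hm : 0 < m) {Ω : Fin m → Type*}
    [∀ ℓ, MeasurableSpace (Ω ℓ)]
    (μ ν : ∀ ℓ, Measure (Ω ℓ))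
    [∀ ℓ, IsProbabilityMeasure (μ ℓ)] [∀ ℓ, IsProbabilityMeasure (ν ℓ)]
    {ε δ δ' : ℝ} (hε : 0 < ε) (hδ : 0 ≤ δ) (hδ' : 0 < δ')
    (h : ∀ ℓ, ApproxIndist ε δ (μ ℓ) (ν ℓ)) {F : Set (∀ ℓ, Ω ℓ)} (hF : MeasurableSet F) :
    Measure.pi μ F ≤
      ENNReal.ofReal (Real.exp (Real.sqrt (2 * m * Real.log (1 / δ')) * ε +
        m * ε * (Real.exp ε - 1))) * Measure.pi ν F + ENNReal.ofReal (m * δ + δ') := by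
  have hm1 : (1 : ℝ) ≤ m := by exact_mod_cast hm
  by_cases hbig : 1 ≤ m * δ + δ'
  · refine prob_le_one.trans (le_add_left ?_)
    exact ENNReal.one_le_ofReal.2 hbig
  have hδm : δ ≤ m * δ := le_mul_of_one_le_left hδ hm1
  have hδ1 : δ < 1 := by linarith
  have hδ'_le : δ' ≤ 1 := by linarith
  choose Q L hQprob hL hLε hPprob hPμ hQν using fun ℓ => (h ℓ).exists_logRatio hε hδ hδ1
  have hpure := measure_pi_tilted_le hm Q hL hε hLε hδ' hδ'_le hF
  set ε' := Real.sqrt (2 * m * Real.log (1 / δ')) * ε + m * ε * (Real.exp ε - 1)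
  set P : ∀ ℓ, Measure (Ω ℓ) :=
    fun ℓ => (Q ℓ).withDensity fun x => ENNReal.ofReal (Real.exp (L ℓ x))
  have hscale : ∀ (R ρ : ∀ ℓ, Measure (Ω ℓ)) [∀ ℓ, IsProbabilityMeasure (R ℓ)],
      (∀ ℓ, ENNReal.ofReal (1 - δ) • R ℓ ≤ ρ ℓ) →
      ENNReal.ofReal ((1 - δ) ^ m) • Measure.pi R ≤ Measure.pi ρ := by
    intro R ρ _ hR
    have hfin : ∀ ℓ, IsFiniteMeasure (ENNReal.ofReal (1 - δ) • R ℓ) := fun ℓ =>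
      Measure.smul_finite _ ENNReal.ofReal_ne_top
    refine le_trans (le_of_eq ?_) (measure_pi_mono hR)
    refine (Measure.pi_eq fun s _ => ?_).symm
    simp [Finset.prod_mul_distrib, ENNReal.ofReal_pow (show 0 ≤ 1 - δ by linarith)]
  have hμ := hscale P μ hPμ
  have hν := hscale Q ν hQν
  set A := (1 - δ) ^ m
  have hA0 : 0 ≤ A := pow_nonneg (by linarith) m
  have hA1 : A ≤ 1 := pow_le_one₀ (by linarith) (by linarith)
  have hAm : 1 - m * δ ≤ A := by
    have := one_add_mul_le_pow (show -2 ≤ -δ by linarith) m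
    rw [← sub_eq_add_neg] at this
    linarith
  have hreal : ∀ (R ρ : Measure (∀ ℓ, Ω ℓ)) [IsProbabilityMeasure R] [IsProbabilityMeasure ρ]
      (G : Set (∀ ℓ, Ω ℓ)), ENNReal.ofReal A • R ≤ ρ → A * R.real G ≤ ρ.real G := by
    intro R ρ _ _ G hle
    have hG := hle G
    rw [Measure.smul_apply, smul_eq_mul, ← ofReal_measureReal (μ := R),
      ← ofReal_measureReal (μ := ρ), ← ENNReal.ofReal_mul hA0] at hG
    exact (ENNReal.ofReal_le_ofReal_iff measureReal_nonneg).1 hG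
  have h1 := hreal _ _ Fᶜ hμ
  have h2 := hreal _ _ F hν
  rw [probReal_compl_eq_one_sub hF, probReal_compl_eq_one_sub hF] at h1
  rw [← ofReal_measureReal (μ := Measure.pi P), ← ofReal_measureReal (μ := Measure.pi Q),
    ← ENNReal.ofReal_mul (Real.exp_pos _).le, ← ENNReal.ofReal_add (by positivity) hδ'.le,
    ENNReal.ofReal_le_ofReal_iff (by positivity)] at hpure
  rw [← ofReal_measureReal (μ := Measure.pi μ), ← ofReal_measureReal (μ := Measure.pi ν),
    ← ENNReal.ofReal_mul (Real.exp_pos _).le, ← ENNReal.ofReal_add (by positivity) (by positivity)]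
  refine ENNReal.ofReal_le_ofReal ?_
  have h3 := mul_le_mul_of_nonneg_left hpure hA0
  have h4 := mul_le_mul_of_nonneg_left h2 (Real.exp_pos ε').le
  have h5 : A * δ' ≤ δ' := mul_le_of_le_one_left hδ'.le hA1
  linarith

/-- Advanced composition for product measures: if `μ_ℓ ≈_{(ε,δ)} ν_ℓ` for each of
`m` coordinates, then the product measures are
`(√(2m·ln(1/δ'))·ε + m·ε·(e^ε − 1), mδ + δ')`-indistinguishable. -/
theorem advanced_composition {m : ℕ} (hm : 0 < m) {Ω : Fin m → Type*}
    [∀ ℓ, MeasurableSpace (Ω ℓ)]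
    (μ ν : ∀ ℓ, Measure (Ω ℓ))
    [∀ ℓ, IsProbabilityMeasure (μ ℓ)] [∀ ℓ, IsProbabilityMeasure (ν ℓ)]
    (ε δ δ' : ℝ) (hε : 0 < ε) (hδ : 0 ≤ δ) (hδ' : 0 < δ')
    (h : ∀ ℓ, ApproxIndist ε δ (μ ℓ) (ν ℓ)) :
    ApproxIndist (Real.sqrt (2 * m * Real.log (1 / δ')) * ε + m * ε * (Real.exp ε - 1))
      (m * δ + δ') (Measure.pi μ) (Measure.pi ν) := by
  exact fun F hF =>
    ⟨measure_pi_le_of_approxIndist hm μ ν hε hδ hδ' h hF,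
      measure_pi_le_of_approxIndist hm ν μ hε hδ hδ' (fun ℓ => (h ℓ).symm) hF⟩
end
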